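/- Let G be a graph on n vertices with minimum cut size t ≥ 1. The number of distinct cuts (partitions of V into two nonempty parts) whose crossing-edge count is at most j·t is at most n^{2j}, for every real j ≥ 1. -/

import Mathlib

open Finset
open scoped Classical

/-- Edges of `G` crossing the partition `(A, Aᶜ)`. -/
noncomputable def cutEdges {V : Type*} [Fintype V] [DecidableEq V]
    (G : SimpleGraph V) (A : Finset V) : Finset (Sym2 V) :=
  G.edgeFinset.filter (fun e => ∃ u ∈ A, ∃ v ∈ Aᶜ, e = s(u, v))

/-!
Work with weighted multigraphs, which are closed under contraction. A contraction creates no new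
cuts, so it preserves the lower bound `t` on cut weights; summing over the cuts around single
vertices, `n` vertices then carry non-loop weight at least `n * t / 2`. A cut of weight at most
`j * t` therefore survives the contraction of a random non-loop edge, chosen with probability
proportional to its weight, with probability at least `1 - 2 * j / n`. If `N n` bounds the number
of such cuts on `n` vertices, double counting gives `N n * (n - 2 * j) ≤ n * N (n - 1)`.

The function `(n - 2 * j + 1) ^ (2 * j)` satisfies the reverse inequality by Bernoulli, and it
dominates the trivial bound `2 ^ (n - 1)` when `2 * j + 1 ≤ n ≤ 2 * j + 2`, where the contractions
stop.
-/

section RealInequalities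

theorem mul_sub_rpow_le {a x : ℝ} (ha : 1 ≤ a) (hx : a < x) :
    x * (x - a) ^ a ≤ (x - a) * (x - a + 1) ^ a := by
  obtain ⟨s, hs, rfl⟩ : ∃ s, 0 < s ∧ x = s + a := ⟨x - a, sub_pos.2 hx, by ring⟩
  rw [add_sub_cancel_right]
  have bernoulli : 1 + a * s⁻¹ ≤ (1 + s⁻¹) ^ a :=
    one_add_mul_self_le_rpow_one_add (by linarith [inv_pos.2 hs]) ha
  calc (s + a) * s ^ a = s * ((1 + a * s⁻¹) * s ^ a) := by field_simp
    _ ≤ s * ((1 + s⁻¹) ^ a * s ^ a) := by gcongr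
    _ = s * (s + 1) ^ a := by
      rw [← Real.mul_rpow (by positivity) hs.le, add_mul, inv_mul_cancel₀ hs.ne', one_mul]

theorem two_rpow_add_sub_one_le_rpow {a d : ℝ} (ha : 2 ≤ a) (hd : 1 ≤ d) (hd' : d ≤ 3) :
    (2 : ℝ) ^ (a + d - 1) ≤ (d + 1) ^ a := by
  -- The exponent `x` below lies in `[0, 1]`, where Bernoulli's inequality is reversed.
  obtain ⟨x, rfl⟩ : ∃ x, d = 2 * x + 1 := ⟨(d - 1) / 2, by ring⟩
  have bernoulli : (2 : ℝ) ^ x ≤ 1 + x := by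
    have := rpow_one_add_le_one_add_mul_self (s := 1) (p := x)
      (by norm_num) (by linarith) (by linarith)
    rwa [one_add_one_eq_two, mul_one] at this
  calc (2 : ℝ) ^ (a + (2 * x + 1) - 1) = 2 ^ a * (2 ^ x) ^ (2 : ℝ) := by
        rw [← Real.rpow_mul zero_le_two, ← Real.rpow_add two_pos]
        ring_nf
    _ ≤ 2 ^ a * (1 + x) ^ (2 : ℝ) := by gcongr
    _ ≤ 2 ^ a * (1 + x) ^ a := by
        gcongr
        linarith
    _ = (2 * x + 1 + 1) ^ a := by
        rw [← Real.mul_rpow zero_le_two (by linarith)]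
        ring_nf

theorem two_pow_sub_one_le_rpow {n : ℕ} {a : ℝ} (hn : 1 ≤ n) (ha : (n : ℝ) ≤ a + 1) :
    (2 : ℝ) ^ (n - 1) ≤ (n : ℝ) ^ a := by
  obtain rfl | hn2 := hn.eq_or_lt
  · simp
  calc (2 : ℝ) ^ (n - 1) ≤ (n : ℝ) ^ (n - 1) := by
        gcongr
        exact_mod_cast hn2
    _ = (n : ℝ) ^ ((n - 1 : ℕ) : ℝ) := (Real.rpow_natCast _ _).symm
    _ ≤ (n : ℝ) ^ a := by
        refine Real.rpow_le_rpow_of_exponent_le (by exact_mod_cast hn) ?_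
        push_cast [hn]
        linarith

end RealInequalities

section Crosses

variable {V V' : Type*}

/-- The edge `e` crosses the cut `(A, Aᶜ)`, in the form used by `cutEdges`. Edges are unordered
pairs and may be loops. -/
def Crosses (A : Finset V) (e : Sym2 V) : Prop :=
  ∃ u ∈ A, ∃ v ∉ A, e = s(u, v)

theorem crosses_mk {A : Finset V} {u v : V} : Crosses A s(u, v) ↔ ¬(u ∈ A ↔ v ∈ A) := by
  constructor
  · rintro ⟨x, hx, y, hy, h⟩
    obtain ⟨rfl, rfl⟩ | ⟨rfl, rfl⟩ := Sym2.eq_iff.1 h <;> simp [hx, hy]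
  · intro h
    by_cases hu : u ∈ A
    · exact ⟨u, hu, v, by tauto, rfl⟩
    · exact ⟨v, by tauto, u, hu, Sym2.eq_swap⟩

theorem Crosses.not_isDiag {A : Finset V} {e : Sym2 V} (h : Crosses A e) : ¬e.IsDiag := by
  obtain ⟨u, hu, v, hv, rfl⟩ := h
  exact fun huv => hv (Sym2.mk_isDiag_iff.1 huv ▸ hu)

variable [Fintype V]

theorem mem_cutEdges [DecidableEq V] {G : SimpleGraph V} {A : Finset V} {e : Sym2 V} :
    e ∈ cutEdges G A ↔ e ∈ G.edgeSet ∧ Crosses A e := by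
  simp only [cutEdges, Crosses, mem_filter, SimpleGraph.mem_edgeFinset, mem_compl]

/-- The preimage of `B` under `f`: the cut that becomes `B` after identifying vertices along `f`.
Unlike `Finset.preimage` it does not ask `f` to be injective. -/
noncomputable def pullback (f : V → V') (B : Finset V') : Finset V :=
  {x | f x ∈ B}

theorem mem_pullback {f : V → V'} {B : Finset V'} {x : V} : x ∈ pullback f B ↔ f x ∈ B :=
  mem_filter_univ x

theorem pullback_eq_univ_iff [Fintype V'] {f : V → V'} (hf : Function.Surjective f)
    {B : Finset V'} : pullback f B = univ ↔ B = univ := by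
  simp only [eq_univ_iff_forall, mem_pullback, hf.forall]

theorem crosses_map {f : V → V'} {B : Finset V'} {e : Sym2 V} :
    Crosses B (e.map f) ↔ Crosses (pullback f B) e := by
  induction e with
  | h u v => simp only [Sym2.map_mk, crosses_mk, mem_pullback]

theorem card_filter_crosses_singleton {e : Sym2 V} (he : ¬e.IsDiag) :
    #{v : V | Crosses {v} e} = 2 := by
  induction e with
  | h a b =>
    have hab : a ≠ b := mt Sym2.mk_isDiag_iff.2 he
    have : ({v : V | Crosses {v} s(a, b)} : Finset V) = {a, b} := by
      ext v
      simp only [crosses_mk, mem_filter_univ, mem_singleton, mem_insert]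
      grind
    rw [this, card_pair hab]

end Crosses

/-- A multigraph with vertex type `V`, edge type `E` and nonnegative real edge weights. Loops and
parallel edges are allowed, so that contracting an edge only changes `ends`. -/
structure WeightedMultigraph (V E : Type*) where
  ends : E → Sym2 V
  weight : E → ℝ
  weight_nonneg : ∀ e, 0 ≤ weight e

/-- The vertex map of the contraction that identifies `v` with `u`. -/
noncomputable def mergeInto {V : Type*} {u v : V} (huv : u ≠ v) (x : V) : {x // x ≠ v} :=
  if hx : x = v then ⟨u, huv⟩ else ⟨x, hx⟩

theorem mergeInto_surjective {V : Type*} {u v : V} (huv : u ≠ v) :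
    Function.Surjective (mergeInto huv) :=
  fun y => ⟨y, dif_neg y.2⟩

theorem exists_pullback_mergeInto_eq {V : Type*} [Fintype V] {u v : V} (huv : u ≠ v)
    {A : Finset V} (hA : u ∈ A ↔ v ∈ A) :
    ∃ B : Finset {x // x ≠ v}, pullback (mergeInto huv) B = A := by
  refine ⟨({y | ↑y ∈ A} : Finset {x // x ≠ v}), ?_⟩
  ext x
  by_cases hx : x = v <;> simp [mem_pullback, mergeInto, hx, hA]

namespace WeightedMultigraph

/-- The weighted multigraph in which every edge of a simple graph has weight `1`. -/
def ofSimpleGraph {V : Type*} (G : SimpleGraph V) : WeightedMultigraph V G.edgeSet where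
  ends := Subtype.val
  weight _ := 1
  weight_nonneg _ := zero_le_one

/-- The image of a multigraph under a vertex map, which keeps all edges: identifying vertices
contracts the edges between them to loops. -/
def map {V V' E : Type*} (G : WeightedMultigraph V E) (f : V → V') : WeightedMultigraph V' E where
  ends e := (G.ends e).map f
  weight := G.weight
  weight_nonneg := G.weight_nonneg

variable {V V' E : Type*} [Fintype E] (G : WeightedMultigraph V E)

/-- The size of the cut `(A, Aᶜ)`: the total weight of the edges crossing it. -/
noncomputable def cutWeight (A : Finset V) : ℝ :=
  ∑ e with Crosses A (G.ends e), G.weight e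

/-- The total weight of the edges that can be contracted. -/
noncomputable def nonLoopWeight : ℝ :=
  ∑ e with ¬(G.ends e).IsDiag, G.weight e

theorem nonLoopWeight_sub_cutWeight (A : Finset V) :
    G.nonLoopWeight - G.cutWeight A =
      ∑ e with ¬(G.ends e).IsDiag, if Crosses A (G.ends e) then 0 else G.weight e := by
  have hcut : G.cutWeight A =
      ∑ e with ¬(G.ends e).IsDiag, if Crosses A (G.ends e) then G.weight e else 0 := by
    rw [cutWeight, ← sum_filter, filter_filter]
    exact sum_congr (filter_congr fun e _ => ⟨fun h => ⟨h.not_isDiag, h⟩, And.right⟩) fun _ _ => rfl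
  rw [hcut, nonLoopWeight, ← sum_sub_distrib]
  exact sum_congr rfl fun e _ => by split_ifs <;> simp

theorem card_mul_nonLoopWeight_sub_le {S : Finset (Finset V)} {c K : ℝ}
    (hS : ∀ A ∈ S, G.cutWeight A ≤ c)
    (hK : ∀ u v, u ≠ v → (#{A ∈ S | u ∈ A ↔ v ∈ A} : ℝ) ≤ K) :
    #S * (G.nonLoopWeight - c) ≤ G.nonLoopWeight * K := by
  have hK' : ∀ e : Sym2 V, ¬e.IsDiag → (#{A ∈ S | ¬Crosses A e} : ℝ) ≤ K := by
    intro e he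
    induction e with
    | h u v => simpa only [crosses_mk, not_not] using hK u v (mt Sym2.mk_isDiag_iff.2 he)
  calc #S * (G.nonLoopWeight - c)
      ≤ ∑ A ∈ S, (G.nonLoopWeight - G.cutWeight A) := by
        rw [← nsmul_eq_mul]
        exact card_nsmul_le_sum _ _ _ fun A hA => sub_le_sub_left (hS A hA) _
    _ = ∑ e with ¬(G.ends e).IsDiag, ∑ A ∈ S,
          if Crosses A (G.ends e) then 0 else G.weight e := by
        simp only [nonLoopWeight_sub_cutWeight]
        exact sum_comm
    _ = ∑ e with ¬(G.ends e).IsDiag, G.weight e * #{A ∈ S | ¬Crosses A (G.ends e)} := by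
        refine sum_congr rfl fun e _ => ?_
        simp only [← ite_not (Crosses _ _), ← sum_filter, sum_const, nsmul_eq_mul, mul_comm]
    _ ≤ ∑ e with ¬(G.ends e).IsDiag, G.weight e * K :=
        sum_le_sum fun e he =>
          mul_le_mul_of_nonneg_left (hK' _ ((mem_filter_univ e).1 he)) (G.weight_nonneg e)
    _ = G.nonLoopWeight * K := (sum_mul ..).symm

variable [Fintype V]

/-- Every cut has weight at least `t`; the weighted form of `t`-edge-connectivity. -/
def IsEdgeConnected (t : ℝ) : Prop :=
  ∀ A : Finset V, A.Nonempty → A ≠ univ → t ≤ G.cutWeight A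

/-- The cuts of weight at most `c`, each represented by the side containing `v₀`. -/
noncomputable def smallCuts (v₀ : V) (c : ℝ) : Finset (Finset V) :=
  {A | v₀ ∈ A ∧ A ≠ univ ∧ G.cutWeight A ≤ c}

theorem cutWeight_ofSimpleGraph [DecidableEq V] (G : SimpleGraph V) (A : Finset V) :
    (ofSimpleGraph G).cutWeight A = #(cutEdges G A) := by
  have : cutEdges G A =
      ({e | Crosses A ((ofSimpleGraph G).ends e)} : Finset G.edgeSet).map (.subtype _) := by
    ext e
    simp only [mem_cutEdges, mem_map, mem_filter_univ]
    simp [ofSimpleGraph, and_comm]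
  rw [this, card_map]
  simp [cutWeight, ofSimpleGraph]

theorem isEdgeConnected_ofSimpleGraph [DecidableEq V] {G : SimpleGraph V} {t : ℕ}
    (ht : ∀ A : Finset V, A.Nonempty → A ≠ univ → t ≤ #(cutEdges G A)) :
    (ofSimpleGraph G).IsEdgeConnected t := by
  intro A hA hA_univ
  rw [cutWeight_ofSimpleGraph]
  exact_mod_cast ht A hA hA_univ

theorem card_smallCuts_le_two_pow (v₀ : V) (c : ℝ) :
    #(G.smallCuts v₀ c) ≤ 2 ^ (Fintype.card V - 1) := by
  calc #(G.smallCuts v₀ c) ≤ #(Icc {v₀} univ) := by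
        refine card_le_card fun A hA => ?_
        simpa using (mem_filter_univ A).1 hA |>.1
    _ = 2 ^ (Fintype.card V - 1) := by
        rw [card_Icc_finset (subset_univ _), card_univ, card_singleton]

theorem sum_cutWeight_singleton : ∑ v, G.cutWeight {v} = 2 * G.nonLoopWeight := by
  calc ∑ v, G.cutWeight {v}
      = ∑ e, ∑ v, if Crosses {v} (G.ends e) then G.weight e else 0 := by
        simp only [cutWeight, sum_filter]
        exact sum_comm
    _ = ∑ e, if (G.ends e).IsDiag then 0 else 2 * G.weight e := by
        refine sum_congr rfl fun e _ => ?_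
        rw [← sum_filter, sum_const, nsmul_eq_mul]
        split_ifs with he
        · rw [filter_eq_empty_iff.2 fun v _ hv => hv.not_isDiag he, card_empty, Nat.cast_zero,
            zero_mul]
        · rw [card_filter_crosses_singleton he, Nat.cast_ofNat]
    _ = 2 * G.nonLoopWeight := by
        simp only [nonLoopWeight, mul_sum, sum_filter, ite_not, mul_ite, mul_zero]

variable {G} in
theorem IsEdgeConnected.card_mul_le_two_mul_nonLoopWeight [Nontrivial V] {t : ℝ}
    (hG : G.IsEdgeConnected t) : Fintype.card V * t ≤ 2 * G.nonLoopWeight := by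
  rw [← G.sum_cutWeight_singleton, ← nsmul_eq_mul]
  exact card_nsmul_le_sum _ _ _ fun v _ =>
    hG {v} (singleton_nonempty v) (singleton_ne_univ v)

section Contraction

theorem cutWeight_map (f : V → V') (B : Finset V') :
    (G.map f).cutWeight B = G.cutWeight (pullback f B) := by
  simp only [cutWeight, map, crosses_map]

variable [Fintype V'] {f : V → V'}

variable {G} in
theorem IsEdgeConnected.map {t : ℝ} (hG : G.IsEdgeConnected t) (hf : Function.Surjective f) :
    (G.map f).IsEdgeConnected t := by
  intro B ⟨y, hy⟩ hB
  obtain ⟨x, rfl⟩ := hf y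
  rw [cutWeight_map]
  exact hG _ ⟨x, mem_pullback.2 hy⟩ (mt (pullback_eq_univ_iff hf).1 hB)

theorem mem_smallCuts_map (hf : Function.Surjective f) {v₀ : V} {c : ℝ} {B : Finset V'} :
    B ∈ (G.map f).smallCuts (f v₀) c ↔ pullback f B ∈ G.smallCuts v₀ c := by
  simp only [smallCuts, mem_filter_univ, mem_pullback, cutWeight_map, ne_eq,
    pullback_eq_univ_iff hf]

theorem card_filter_smallCuts_le_card_smallCuts_map {u v : V} (huv : u ≠ v) (v₀ : V) (c : ℝ) :
    #{A ∈ G.smallCuts v₀ c | u ∈ A ↔ v ∈ A} ≤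
      #((G.map (mergeInto huv)).smallCuts (mergeInto huv v₀) c) := by
  refine card_le_card_of_surjOn (pullback (mergeInto huv)) ?_
  intro A hA
  obtain ⟨hA_small, hA_mem⟩ := mem_filter.1 (mem_coe.1 hA)
  obtain ⟨B, rfl⟩ := exists_pullback_mergeInto_eq huv hA_mem
  exact ⟨B, mem_coe.2 ((G.mem_smallCuts_map (mergeInto_surjective huv)).2 hA_small), rfl⟩

end Contraction

variable {G} {t : ℝ}

theorem IsEdgeConnected.card_smallCuts_mul_sub_le [Nontrivial V] (hG : G.IsEdgeConnected t)
    (ht : 0 < t) {v₀ : V} {j K : ℝ} (hj : 0 ≤ j)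
    (hK : ∀ u v (huv : u ≠ v),
      #((G.map (mergeInto huv)).smallCuts (mergeInto huv v₀) (j * t)) ≤ K) :
    #(G.smallCuts v₀ (j * t)) * ((Fintype.card V : ℝ) - 2 * j) ≤ Fintype.card V * K := by
  set n : ℝ := (Fintype.card V : ℝ)
  set N : ℝ := (#(G.smallCuts v₀ (j * t)) : ℝ)
  set W := G.nonLoopWeight
  have hn : 0 < n := Nat.cast_pos.2 Fintype.card_pos
  have hW : n * t ≤ 2 * W := hG.card_mul_le_two_mul_nonLoopWeight
  have hW_pos : 0 < W := by linarith [mul_pos hn ht]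
  have hNK : N * (W - j * t) ≤ W * K :=
    G.card_mul_nonLoopWeight_sub_le (fun A hA => ((mem_filter_univ A).1 hA).2.2) fun u v huv =>
      (Nat.cast_le.2 (G.card_filter_smallCuts_le_card_smallCuts_map huv v₀ _)).trans (hK u v huv)
  have survival : W * (n - 2 * j) ≤ n * (W - j * t) := by
    linarith [mul_le_mul_of_nonneg_left hW hj]
  refine le_of_mul_le_mul_left ?_ hW_pos
  calc W * (N * (n - 2 * j)) = N * (W * (n - 2 * j)) := by ring
    _ ≤ N * (n * (W - j * t)) := by gcongr
    _ = n * (N * (W - j * t)) := by ring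
    _ ≤ n * (W * K) := by gcongr
    _ = W * (n * K) := by ring

variable (G) in
theorem card_smallCuts_le_sub_rpow_of_card_le (v₀ : V) {j : ℝ} (c : ℝ) (hj : 1 ≤ j)
    (hn : 2 * j + 1 ≤ Fintype.card V) (hn' : Fintype.card V ≤ 2 * j + 3) :
    #(G.smallCuts v₀ c) ≤ ((Fintype.card V : ℝ) - 2 * j + 1) ^ (2 * j) := by
  calc (#(G.smallCuts v₀ c) : ℝ) ≤ 2 ^ (Fintype.card V - 1) := by
        exact_mod_cast G.card_smallCuts_le_two_pow v₀ c
    _ = 2 ^ (2 * j + (Fintype.card V - 2 * j) - 1) := by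
        rw [← Real.rpow_natCast, Nat.cast_pred (Fintype.card_pos_iff.2 ⟨v₀⟩)]
        ring_nf
    _ ≤ ((Fintype.card V : ℝ) - 2 * j + 1) ^ (2 * j) :=
        two_rpow_add_sub_one_le_rpow (by linarith) (by linarith) (by linarith)

theorem IsEdgeConnected.card_smallCuts_le_sub_rpow (hG : G.IsEdgeConnected t) (ht : 0 < t) (v₀ : V)
    {j : ℝ} (hj : 1 ≤ j) (hn : 2 * j + 1 ≤ Fintype.card V) :
    #(G.smallCuts v₀ (j * t)) ≤ ((Fintype.card V : ℝ) - 2 * j + 1) ^ (2 * j) := by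
  induction hk : Fintype.card V generalizing V with
  | zero => exact absurd hk (Fintype.card_pos_iff.2 ⟨v₀⟩).ne'
  | succ k ih =>
    obtain hbase | hstep := lt_or_ge (k : ℝ) (2 * j + 1)
    · rw [← hk]
      refine G.card_smallCuts_le_sub_rpow_of_card_le v₀ _ hj hn ?_
      push_cast [hk]
      linarith
    have : Nontrivial V := by
      rw [← Fintype.one_lt_card_iff_nontrivial, ← Nat.one_lt_cast (α := ℝ)]
      linarith
    have contraction_bound : ∀ u v (huv : u ≠ v),
        (#((G.map (mergeInto huv)).smallCuts (mergeInto huv v₀) (j * t)) : ℝ) ≤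
          ((k + 1 : ℕ) - 2 * j) ^ (2 * j) := by
      intro u v huv
      have hcard : Fintype.card {x // x ≠ v} = k := by simp [hk]
      convert ih (hG.map (mergeInto_surjective huv)) _ (by rwa [hcard]) hcard using 2
      push_cast
      ring
    have averaging := hG.card_smallCuts_mul_sub_le ht (by linarith) contraction_bound
    rw [hk] at hn averaging
    refine le_of_mul_le_mul_right ?_ (by linarith : 0 < ((k + 1 : ℕ) : ℝ) - 2 * j)
    calc #(G.smallCuts v₀ (j * t)) * (((k + 1 : ℕ) : ℝ) - 2 * j)
        ≤ (k + 1 : ℕ) * ((k + 1 : ℕ) - 2 * j) ^ (2 * j) := averaging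
      _ ≤ ((k + 1 : ℕ) - 2 * j) * ((k + 1 : ℕ) - 2 * j + 1) ^ (2 * j) :=
          mul_sub_rpow_le (by linarith) (by linarith)
      _ = ((k + 1 : ℕ) - 2 * j + 1) ^ (2 * j) * ((k + 1 : ℕ) - 2 * j) := mul_comm _ _

end WeightedMultigraph

theorem stmt5_general {V E : Type*} [Fintype V] [Fintype E] {G : WeightedMultigraph V E} {t : ℝ}
    (hG : G.IsEdgeConnected t) (ht : 0 < t) (v₀ : V) {j : ℝ} (hj : 1 ≤ j) :
    #(G.smallCuts v₀ (j * t)) ≤ (Fintype.card V : ℝ) ^ (2 * j) := by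
  obtain hn | hn := le_total (2 * j + 1) (Fintype.card V : ℝ)
  · refine (hG.card_smallCuts_le_sub_rpow ht v₀ hj hn).trans ?_
    exact Real.rpow_le_rpow (by linarith) (by linarith) (by linarith)
  · calc (#(G.smallCuts v₀ (j * t)) : ℝ) ≤ 2 ^ (Fintype.card V - 1) := by
          exact_mod_cast G.card_smallCuts_le_two_pow v₀ (j * t)
      _ ≤ (Fintype.card V : ℝ) ^ (2 * j) :=
          two_pow_sub_one_le_rpow (Fintype.card_pos_iff.2 ⟨v₀⟩) hn

/-- Karger's cut-counting bound: in a connected graph on `n` vertices with minimum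
cut size `t ≥ 1`, the number of distinct cuts (partitions of `V` into two nonempty
parts, here represented by the part containing a fixed vertex `v₀`) whose
crossing-edge count is at most `j·t` is at most `n^(2j)`, for every real `j ≥ 1`. -/
theorem stmt5 {V : Type*} [Fintype V] [DecidableEq V] (G : SimpleGraph V)
    (hG : G.Connected) (t : ℕ) (ht : 1 ≤ t)
    (hmin : ∀ A : Finset V, A.Nonempty → A ≠ Finset.univ → t ≤ (cutEdges G A).card)
    (hex : ∃ A : Finset V, A.Nonempty ∧ A ≠ Finset.univ ∧ (cutEdges G A).card = t)
    (v₀ : V) (j : ℝ) (hj : 1 ≤ j) :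
    (((Finset.univ.powerset.filter (fun A : Finset V =>
        v₀ ∈ A ∧ A ≠ Finset.univ ∧ ((cutEdges G A).card : ℝ) ≤ j * t)).card : ℝ))
      ≤ (Fintype.card V : ℝ) ^ (2 * j) := by
  simpa only [WeightedMultigraph.smallCuts, WeightedMultigraph.cutWeight_ofSimpleGraph,
    powerset_univ] using
    stmt5_general (WeightedMultigraph.isEdgeConnected_ofSimpleGraph hmin) (Nat.cast_pos.2 ht) v₀ hj
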